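/- Let A be an n×n real matrix and C an m×n real matrix such that the pair (A, C) is completely observable. Then there exists a constant c > 0, depending only on A and C, such that for every z ∈ W^{1,1}([0,1], ℝ^n) one has ∫₀¹ |z(t)| dt + ∫₀¹ |ż(t)| dt ≤ c ( ∫₀¹ |C z(t)| dt + ∫₀¹ |ż(t) − A z(t)| dt ). -/

import Mathlib

/-!
Let `f = ż - A z`. By Grönwall's inequality, `z` stays within a constant times `∫ ‖f‖` of the free
trajectory `t ↦ exp (t A) (z 0)`, uniformly in `t`. Observability makes `v ↦ ∫ ‖C exp (t A) v‖` a
norm on the finite-dimensional state space, so it dominates `‖v‖` by compactness of the unit sphere.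
Taking `v = z 0`, the initial value, and with it all of `z`, is controlled by `∫ ‖C z‖ + ∫ ‖f‖`;
the bound on `ż = f + A z` follows.
-/

open MeasureTheory

/-- The pair `(A, C)` is completely observable: the only vector `v` with
`C A^k v = 0` for all `k = 0, …, n-1` is `v = 0`. -/
def CompletelyObservable (n m : ℕ) (A : Matrix (Fin n) (Fin n) ℝ)
    (C : Matrix (Fin m) (Fin n) ℝ) : Prop :=
  ∀ v : Fin n → ℝ, (∀ k < n, (C * A ^ k).mulVec v = 0) → v = 0

open Set Filter NormedSpace Topology

section Homogeneous

variable {E : Type*} [NormedAddCommGroup E] [NormedSpace ℝ E] [ProperSpace E]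

lemma exists_norm_le_mul_of_homogeneous {N : E → ℝ} (hcont : Continuous N)
    (hsmul : ∀ (c : ℝ) (v : E), 0 ≤ c → N (c • v) = c * N v) (hpos : ∀ v ≠ 0, 0 < N v) :
    ∃ K > 0, ∀ v, ‖v‖ ≤ K * N v := by
  rcases subsingleton_or_nontrivial E with hE | hE
  · have hN (v : E) : N v = 0 := by simpa [Subsingleton.elim v 0] using hsmul 0 0 le_rfl
    exact ⟨1, one_pos, fun v => by simp [hN, Subsingleton.elim v 0]⟩
  obtain ⟨u, hu, hmin⟩ := (isCompact_sphere (0 : E) 1).exists_isMinOn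
    (NormedSpace.sphere_nonempty.2 zero_le_one) hcont.continuousOn
  have hNu : 0 < N u := hpos u (ne_zero_of_mem_unit_sphere ⟨u, hu⟩)
  refine ⟨(N u)⁻¹, inv_pos.2 hNu, fun v => ?_⟩
  rw [inv_mul_eq_div, le_div_iff₀ hNu]
  rcases eq_or_ne v 0 with rfl | hv
  · simpa using (hsmul 0 0 le_rfl).ge
  calc ‖v‖ * N u ≤ ‖v‖ * N (‖v‖⁻¹ • v) := by
        gcongr
        exact hmin (by simp [norm_smul, hv])
    _ = N v := by rw [hsmul _ _ (by positivity), mul_inv_cancel_left₀ (norm_ne_zero_iff.2 hv)]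

end Homogeneous

section Flow

variable {E F : Type*} [NormedAddCommGroup E] [NormedSpace ℝ E] [CompleteSpace E]
  [NormedAddCommGroup F] [NormedSpace ℝ F]

lemma hasDerivAt_exp_smul_apply (L : E →L[ℝ] E) (v : E) (t : ℝ) :
    HasDerivAt (fun s : ℝ => exp (s • L) v) (L (exp (t • L) v)) t := by
  simpa using (hasDerivAt_exp_smul_const' L t).clm_apply (hasDerivAt_const t v)

lemma continuous_exp_smul_apply (L : E →L[ℝ] E) :
    Continuous fun p : ℝ × E => exp (p.1 • L) p.2 :=
  ((differentiable_exp_smul_const ℝ L).continuous.comp continuous_fst).clm_apply continuous_snd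

lemma eq_zero_of_exp_apply_eq_zero {L : E →L[ℝ] E} {v : E} (h : exp L v = 0) : v = 0 := by
  let : NormedAlgebra ℚ (E →L[ℝ] E) := NormedAlgebra.restrictScalars ℚ ℝ _
  obtain ⟨u, hu⟩ := isUnit_exp L
  have huv : (↑u⁻¹ * ↑u : E →L[ℝ] E) v = 0 := by
    rw [mul_apply_eq_comp, hu, h, map_zero]
  simpa using huv

lemma iteratedDeriv_clm_exp_smul_apply (L : E →L[ℝ] E) (Q : E →L[ℝ] F) (v : E) (k : ℕ) :
    iteratedDeriv k (fun t : ℝ => Q (exp (t • L) v)) =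
      fun t : ℝ => Q ((L ^ k) (exp (t • L) v)) := by
  induction k with
  | zero => simp
  | succ k ih =>
    funext t
    rw [iteratedDeriv_succ, ih, pow_succ]
    exact ((Q.comp (L ^ k)).hasFDerivAt.comp_hasDerivAt t
      (hasDerivAt_exp_smul_apply L v t)).deriv

end Flow

section Observability

variable {E F : Type*} [NormedAddCommGroup E] [NormedSpace ℝ E]
  [NormedAddCommGroup F] [NormedSpace ℝ F]

/-- Observability of the system `ẋ = L x` with output `Q x`, as the triviality of the unobservable
subspace `⋂ k, ker (Q * L ^ k)`. All powers of `L` occur, so that no dimension has to be mentioned;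
by Cayley-Hamilton, those below `dim E` already suffice. -/
def ObservablePair (L : E →L[ℝ] E) (Q : E →L[ℝ] F) : Prop :=
  ∀ v, (∀ k, Q ((L ^ k) v) = 0) → v = 0

namespace ObservablePair

variable {L : E →L[ℝ] E} {Q : E →L[ℝ] F}

lemma eq_zero_of_eventually_output_eq_zero [CompleteSpace E] (h : ObservablePair L Q) {v : E}
    {t₀ : ℝ} (hv : ∀ᶠ t in 𝓝 t₀, Q (exp (t • L) v) = 0) : v = 0 := by
  have hderiv (k : ℕ) : Q ((L ^ k) (exp (t₀ • L) v)) = 0 := by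
    have hzero : (fun t : ℝ => Q (exp (t • L) v)) =ᶠ[𝓝 t₀] fun _ => 0 := hv
    simpa [iteratedDeriv_clm_exp_smul_apply] using hzero.iteratedDeriv_eq k
  exact eq_zero_of_exp_apply_eq_zero (h _ hderiv)

variable [FiniteDimensional ℝ E]

lemma exists_norm_le_mul_integral_output (h : ObservablePair L Q) {a b : ℝ} (hab : a < b) :
    ∃ K > 0, ∀ v, ‖v‖ ≤ K * ∫ t in a..b, ‖Q (exp ((t - a) • L) v)‖ := by
  have : CompleteSpace E := FiniteDimensional.complete ℝ E
  have : ProperSpace E := FiniteDimensional.proper_real E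
  have hcont : Continuous fun p : E × ℝ => ‖Q (exp ((p.2 - a) • L) p.1)‖ :=
    (Q.continuous.comp ((continuous_exp_smul_apply L).comp
      ((continuous_snd.sub continuous_const).prodMk continuous_fst))).norm
  refine exists_norm_le_mul_of_homogeneous
    (intervalIntegral.continuous_parametric_intervalIntegral_of_continuous' hcont a b)
    (fun c v hc => by simp [norm_smul, abs_of_nonneg hc]) fun v hv => ?_
  refine intervalIntegral.integral_pos hab (hcont.comp (Continuous.prodMk_right v)).continuousOn
    (fun _ _ => norm_nonneg _) ?_
  by_contra! hle
  have hout : ∀ s ∈ Icc 0 (b - a), Q (exp (s • L) v) = 0 := fun s hs => by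
    simpa using hle (s + a) ⟨by linarith [hs.1], by linarith [hs.2]⟩
  have hmid : Icc 0 (b - a) ∈ 𝓝 ((b - a) / 2) := Icc_mem_nhds (by linarith) (by linarith)
  exact hv (h.eq_zero_of_eventually_output_eq_zero (mem_of_superset hmid hout))

end ObservablePair

end Observability

section Gronwall

variable {E : Type*} [NormedAddCommGroup E] [NormedSpace ℝ E] {z z' x : ℝ → E} {a b : ℝ}

lemma gronwallBound_self_mul (δ K ε t : ℝ) :
    gronwallBound δ K (K * ε) t = δ * Real.exp (K * t) + ε * (Real.exp (K * t) - 1) := by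
  rcases eq_or_ne K 0 with rfl | hK
  · simp [gronwallBound_K0]
  · rw [gronwallBound_of_K_ne_0 hK, mul_div_cancel_left₀ _ hK]

lemma continuousOn_of_eq_add_integral (hz' : IntervalIntegrable z' volume a b)
    (hz : ∀ t ∈ Icc a b, z t = z a + ∫ s in a..t, z' s) : ContinuousOn z (Icc a b) := by
  rcases lt_or_ge b a with hba | hab
  · simp [Icc_eq_empty_of_lt hba]
  have hprim := intervalIntegral.continuousOn_primitive_interval' hz' left_mem_uIcc
  rw [uIcc_of_le hab] at hprim
  exact (continuousOn_const.add hprim).congr hz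

lemma norm_sub_add_integral_clm_le (L : E →L[ℝ] E) (hz' : IntervalIntegrable z' volume a b)
    (hz : ∀ t ∈ Icc a b, z t = z a + ∫ s in a..t, z' s) {t : ℝ} (ht : t ∈ Icc a b) :
    ‖z t - (z a + ∫ s in a..t, L (z s))‖ ≤ ∫ s in a..b, ‖z' s - L (z s)‖ := by
  have hab : a ≤ b := ht.1.trans ht.2
  have hLz : IntervalIntegrable (fun s => L (z s)) volume a b :=
    (L.continuous.comp_continuousOn
      (continuousOn_of_eq_add_integral hz' hz)).intervalIntegrable_of_Icc hab
  have hsub : uIcc a t ⊆ uIcc a b := uIcc_subset_uIcc_left (uIcc_of_le hab ▸ ht)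
  calc ‖z t - (z a + ∫ s in a..t, L (z s))‖
      = ‖∫ s in a..t, (z' s - L (z s))‖ := by
        rw [hz t ht, add_sub_add_left_eq_sub,
          intervalIntegral.integral_sub (hz'.mono_set hsub) (hLz.mono_set hsub)]
    _ ≤ ∫ s in a..t, ‖z' s - L (z s)‖ := intervalIntegral.norm_integral_le_integral_norm ht.1
    _ ≤ ∫ s in a..b, ‖z' s - L (z s)‖ :=
        intervalIntegral.integral_mono_interval le_rfl ht.1 ht.2
          (Eventually.of_forall fun _ => norm_nonneg _) (hz'.sub hLz).norm

lemma norm_sub_le_exp_mul_of_trajectory [CompleteSpace E] (L : E →L[ℝ] E)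
    (hz' : IntervalIntegrable z' volume a b)
    (hz : ∀ t ∈ Icc a b, z t = z a + ∫ s in a..t, z' s)
    (hx : ∀ t ∈ Icc a b, HasDerivWithinAt x (L (x t)) (Icc a b) t) {t : ℝ} (ht : t ∈ Icc a b) :
    ‖z t - x t‖ ≤ Real.exp (‖L‖ * (t - a)) * (‖z a - x a‖ + ∫ s in a..b, ‖z' s - L (z s)‖) := by
  set ε := ∫ s in a..b, ‖z' s - L (z s)‖
  -- `z` need not be differentiable everywhere, but it is uniformly `ε`-close to `y`, which is.
  let y : ℝ → E := ODE.picard (fun _ v => L v) a (z a) z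
  have hzy (s) (hs : s ∈ Icc a b) : ‖z s - y s‖ ≤ ε := norm_sub_add_integral_clm_le L hz' hz hs
  have hy (s) (hs : s ∈ Icc a b) : HasDerivWithinAt y (L (z s)) (Icc a b) s :=
    ODE.hasDerivWithinAt_picard_Icc (u := univ) (left_mem_Icc.2 (ht.1.trans ht.2)) (by fun_prop)
      (continuousOn_of_eq_add_integral hz' hz) (fun _ _ => mem_univ _) _ hs
  have hright {w : ℝ → E} {w' : E} {s : ℝ} (hs : s ∈ Ico a b)
      (hw : HasDerivWithinAt w w' (Icc a b) s) : HasDerivWithinAt w w' (Ici s) s :=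
    hw.mono_of_mem_nhdsWithin (Icc_mem_nhdsGE_of_mem hs)
  have hyx : dist (y t) (x t) ≤ gronwallBound ‖z a - x a‖ ‖L‖ (‖L‖ * ε + 0) (t - a) :=
    dist_le_of_approx_trajectories_ODE (v := fun _ => L) (fun _ => L.lipschitz)
      (fun s hs => (hy s hs).continuousWithinAt)
      (fun s hs => hright hs (hy s (Ico_subset_Icc_self hs)))
      (fun s hs => by
        rw [dist_eq_norm, ← map_sub]
        exact L.le_opNorm_of_le (hzy s (Ico_subset_Icc_self hs)))
      (fun s hs => (hx s hs).continuousWithinAt)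
      (fun s hs => hright hs (hx s (Ico_subset_Icc_self hs)))
      (fun _ _ => (dist_self _).le) (by simp [y, dist_eq_norm]) t ht
  rw [add_zero, gronwallBound_self_mul, dist_eq_norm] at hyx
  linarith [norm_sub_le_norm_sub_add_norm_sub (z t) (y t) (x t), hzy t ht]

end Gronwall

section Estimate

variable {E F : Type*} [NormedAddCommGroup E] [NormedSpace ℝ E]
  [NormedAddCommGroup F] [NormedSpace ℝ F] {z z' : ℝ → E} {a b : ℝ}
  (L : E →L[ℝ] E) (Q : E →L[ℝ] F)

lemma norm_le_exp_mul_initial_add_residual [CompleteSpace E]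
    (hz' : IntervalIntegrable z' volume a b)
    (hz : ∀ t ∈ Icc a b, z t = z a + ∫ s in a..t, z' s) {t : ℝ} (ht : t ∈ Icc a b) :
    ‖z t‖ ≤ Real.exp (‖L‖ * (b - a)) * (‖z a‖ + ∫ s in a..b, ‖z' s - L (z s)‖) := by
  have hε : 0 ≤ ∫ s in a..b, ‖z' s - L (z s)‖ :=
    intervalIntegral.integral_nonneg (ht.1.trans ht.2) fun _ _ => norm_nonneg _
  have hzero (s : ℝ) : HasDerivWithinAt (fun _ => (0 : E)) (L 0) (Icc a b) s := by
    simpa using hasDerivWithinAt_const s (Icc a b) (0 : E)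
  have hz0 := norm_sub_le_exp_mul_of_trajectory L hz' hz (fun s _ => hzero s) ht
  simp only [sub_zero] at hz0
  refine hz0.trans ?_
  gcongr
  exact ht.2

lemma norm_sub_exp_smul_apply_le [CompleteSpace E]
    (hz' : IntervalIntegrable z' volume a b)
    (hz : ∀ t ∈ Icc a b, z t = z a + ∫ s in a..t, z' s) {t : ℝ} (ht : t ∈ Icc a b) :
    ‖z t - exp ((t - a) • L) (z a)‖ ≤
      Real.exp (‖L‖ * (b - a)) * ∫ s in a..b, ‖z' s - L (z s)‖ := by
  have hε : 0 ≤ ∫ s in a..b, ‖z' s - L (z s)‖ :=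
    intervalIntegral.integral_nonneg (ht.1.trans ht.2) fun _ _ => norm_nonneg _
  have hflow (s : ℝ) :
      HasDerivAt (fun s => exp ((s - a) • L) (z a)) (L (exp ((s - a) • L) (z a))) s :=
    (hasDerivAt_exp_smul_apply L (z a) (s - a)).comp_sub_const s a
  have hzx := norm_sub_le_exp_mul_of_trajectory L hz' hz (fun s _ => (hflow s).hasDerivWithinAt) ht
  simp only [sub_self, zero_smul, exp_zero, one_apply_eq_self, norm_zero, zero_add] at hzx
  refine hzx.trans ?_
  gcongr
  exact ht.2

lemma integral_norm_output_trajectory_le [CompleteSpace E] (hab : a ≤ b)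
    (hz' : IntervalIntegrable z' volume a b)
    (hz : ∀ t ∈ Icc a b, z t = z a + ∫ s in a..t, z' s) :
    ∫ t in a..b, ‖Q (exp ((t - a) • L) (z a))‖ ≤ (∫ t in a..b, ‖Q (z t)‖) +
      ‖Q‖ * Real.exp (‖L‖ * (b - a)) * (b - a) * ∫ t in a..b, ‖z' t - L (z t)‖ := by
  set x : ℝ → E := fun t => exp ((t - a) • L) (z a)
  set r := Real.exp (‖L‖ * (b - a)) * ∫ t in a..b, ‖z' t - L (z t)‖ with hr
  have hx : Continuous x :=
    (continuous_exp_smul_apply L).comp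
      ((continuous_id.sub continuous_const).prodMk continuous_const)
  have hQx : IntervalIntegrable (fun t => ‖Q (x t)‖) volume a b :=
    (Q.continuous.comp hx).norm.intervalIntegrable a b
  have hQz : IntervalIntegrable (fun t => ‖Q (z t)‖) volume a b :=
    (Q.continuous.comp_continuousOn
      (continuousOn_of_eq_add_integral hz' hz)).norm.intervalIntegrable_of_Icc hab
  have hbound (t) (ht : t ∈ Icc a b) : ‖Q (x t)‖ ≤ ‖Q (z t)‖ + ‖Q‖ * r :=
    calc ‖Q (x t)‖ ≤ ‖Q (z t)‖ + ‖Q (z t) - Q (x t)‖ := norm_le_insert _ _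
      _ = ‖Q (z t)‖ + ‖Q (z t - x t)‖ := by rw [map_sub]
      _ ≤ ‖Q (z t)‖ + ‖Q‖ * r := by
        gcongr
        exact Q.le_opNorm_of_le (norm_sub_exp_smul_apply_le L hz' hz ht)
  calc ∫ t in a..b, ‖Q (x t)‖
      ≤ ∫ t in a..b, (‖Q (z t)‖ + ‖Q‖ * r) :=
        intervalIntegral.integral_mono_on hab hQx (hQz.add intervalIntegrable_const) hbound
    _ = (∫ t in a..b, ‖Q (z t)‖) + (b - a) * (‖Q‖ * r) := by
        rw [intervalIntegral.integral_add hQz intervalIntegrable_const,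
          intervalIntegral.integral_const, smul_eq_mul]
    _ = _ := by rw [hr]; ring

lemma integral_norm_deriv_le (hab : a ≤ b) (hz' : IntervalIntegrable z' volume a b)
    (hz : ContinuousOn z (Icc a b)) :
    ∫ t in a..b, ‖z' t‖ ≤
      (∫ t in a..b, ‖z' t - L (z t)‖) + ‖L‖ * ∫ t in a..b, ‖z t‖ := by
  have hres : IntervalIntegrable (fun t => z' t - L (z t)) volume a b :=
    hz'.sub ((L.continuous.comp_continuousOn hz).intervalIntegrable_of_Icc hab)
  have hLz : IntervalIntegrable (fun t => ‖L‖ * ‖z t‖) volume a b :=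
    (hz.norm.intervalIntegrable_of_Icc hab).const_mul _
  rw [← intervalIntegral.integral_const_mul, ← intervalIntegral.integral_add hres.norm hLz]
  refine intervalIntegral.integral_mono_on hab hz'.norm (hres.norm.add hLz) fun t _ => ?_
  calc ‖z' t‖ ≤ ‖z' t - L (z t)‖ + ‖L (z t)‖ := norm_le_norm_sub_add _ _
    _ ≤ ‖z' t - L (z t)‖ + ‖L‖ * ‖z t‖ := by gcongr; exact L.le_opNorm _

variable {L Q} [FiniteDimensional ℝ E]

lemma ObservablePair.exists_norm_le_mul_output_add_residual (h : ObservablePair L Q)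
    (hab : a < b) :
    ∃ K > 0, ∀ z z' : ℝ → E, IntervalIntegrable z' volume a b →
      (∀ t ∈ Icc a b, z t = z a + ∫ s in a..t, z' s) → ∀ t ∈ Icc a b,
        ‖z t‖ ≤ K * ((∫ s in a..b, ‖Q (z s)‖) + ∫ s in a..b, ‖z' s - L (z s)‖) := by
  have : CompleteSpace E := FiniteDimensional.complete ℝ E
  obtain ⟨K, hK, hinit⟩ := h.exists_norm_le_mul_integral_output hab
  set M := Real.exp (‖L‖ * (b - a))
  set D := ‖Q‖ * M * (b - a)
  have hD : 0 ≤ D := mul_nonneg (by positivity) (sub_nonneg.2 hab.le)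
  refine ⟨M * (K * (1 + D) + 1), by positivity, fun z z' hz' hz t ht => ?_⟩
  have hp : 0 ≤ ∫ s in a..b, ‖Q (z s)‖ :=
    intervalIntegral.integral_nonneg hab.le fun _ _ => norm_nonneg _
  have hε : 0 ≤ ∫ s in a..b, ‖z' s - L (z s)‖ :=
    intervalIntegral.integral_nonneg hab.le fun _ _ => norm_nonneg _
  have hout := integral_norm_output_trajectory_le L Q hab.le hz' hz
  have htraj := norm_le_exp_mul_initial_add_residual L hz' hz ht
  set p := ∫ s in a..b, ‖Q (z s)‖
  set ε := ∫ s in a..b, ‖z' s - L (z s)‖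
  have hza : ‖z a‖ ≤ K * (1 + D) * (p + ε) :=
    calc ‖z a‖ ≤ K * (p + D * ε) := (hinit (z a)).trans (by gcongr)
      _ ≤ K * ((1 + D) * (p + ε)) := by gcongr; linarith [mul_nonneg hD hp]
      _ = K * (1 + D) * (p + ε) := by ring
  calc ‖z t‖ ≤ M * (K * (1 + D) * (p + ε) + (p + ε)) :=
        htraj.trans (by gcongr; exact le_add_of_nonneg_left hp)
    _ = M * (K * (1 + D) + 1) * (p + ε) := by ring

theorem observability_W11_estimate_general (h : ObservablePair L Q) (hab : a < b) :
    ∃ c > 0, ∀ z z' : ℝ → E, IntervalIntegrable z' volume a b →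
      (∀ t ∈ Icc a b, z t = z a + ∫ s in a..t, z' s) →
      (∫ t in a..b, ‖z t‖) + (∫ t in a..b, ‖z' t‖) ≤
        c * ((∫ t in a..b, ‖Q (z t)‖) + ∫ t in a..b, ‖z' t - L (z t)‖) := by
  have : CompleteSpace E := FiniteDimensional.complete ℝ E
  obtain ⟨K, hK, hsup⟩ := h.exists_norm_le_mul_output_add_residual hab
  have : 0 < b - a := sub_pos.2 hab
  refine ⟨(1 + ‖L‖) * ((b - a) * K) + 1, by positivity, fun z z' hz' hz => ?_⟩
  have hzcont := continuousOn_of_eq_add_integral hz' hz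
  have hp : 0 ≤ ∫ t in a..b, ‖Q (z t)‖ :=
    intervalIntegral.integral_nonneg hab.le fun _ _ => norm_nonneg _
  have hderiv := integral_norm_deriv_le L hab.le hz' hzcont
  have hstate : ∫ t in a..b, ‖z t‖ ≤
      (b - a) * K * ((∫ t in a..b, ‖Q (z t)‖) + ∫ t in a..b, ‖z' t - L (z t)‖) := by
    rw [mul_assoc, ← smul_eq_mul (b - a), ← intervalIntegral.integral_const]
    exact intervalIntegral.integral_mono_on hab.le
      (hzcont.norm.intervalIntegrable_of_Icc hab.le) intervalIntegrable_const (hsup z z' hz' hz)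
  linarith [mul_le_mul_of_nonneg_left hstate (by positivity : 0 ≤ 1 + ‖L‖)]

end Estimate

section Matrix

variable {n m : ℕ} {A : Matrix (Fin n) (Fin n) ℝ} {C : Matrix (Fin m) (Fin n) ℝ}

lemma CompletelyObservable.observablePair (h : CompletelyObservable n m A C) :
    ObservablePair (Matrix.toEuclideanCLM (𝕜 := ℝ) A)
      (Matrix.toEuclideanLin C).toContinuousLinearMap := by
  intro v hv
  refine (WithLp.ofLp_eq_zero 2).1 (h v.ofLp fun k _ => ?_)
  have hk := hv k
  rw [← map_pow] at hk
  rw [← Matrix.mulVec_mulVec]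
  exact congrArg WithLp.ofLp hk

end Matrix

/-- **A priori estimate in `W^{1,1}([0,1])`.**
If `(A, C)` is completely observable, there is `c > 0` such that for every
`z ∈ W^{1,1}([0,1], ℝⁿ)` — encoded as a continuous function with integrable
derivative `z'` satisfying `z t = z 0 + ∫₀ᵗ z'` — one has
`∫₀¹ ‖z‖ + ∫₀¹ ‖ż‖ ≤ c (∫₀¹ ‖C z‖ + ∫₀¹ ‖ż − A z‖)`. -/
theorem observability_W11_estimate
    (n m : ℕ) (A : Matrix (Fin n) (Fin n) ℝ) (C : Matrix (Fin m) (Fin n) ℝ)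
    (hobs : CompletelyObservable n m A C) :
    ∃ c > 0, ∀ z z' : ℝ → EuclideanSpace ℝ (Fin n),
      ContinuousOn z (Set.Icc 0 1) →
      IntegrableOn z' (Set.Icc 0 1) →
      (∀ t ∈ Set.Icc (0:ℝ) 1, z t = z 0 + ∫ s in (0:ℝ)..t, z' s) →
      (∫ t in Set.Icc (0:ℝ) 1, ‖z t‖) + (∫ t in Set.Icc (0:ℝ) 1, ‖z' t‖) ≤
        c * ((∫ t in Set.Icc (0:ℝ) 1, ‖Matrix.toEuclideanLin C (z t)‖) +
             ∫ t in Set.Icc (0:ℝ) 1, ‖z' t - Matrix.toEuclideanLin A (z t)‖) := by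
  obtain ⟨c, hc, hle⟩ := observability_W11_estimate_general hobs.observablePair zero_lt_one
  refine ⟨c, hc, fun z z' _ hz' hz => ?_⟩
  simp only [integral_Icc_eq_integral_Ioc, ← intervalIntegral.integral_of_le zero_le_one]
  exact hle z z' ((intervalIntegrable_iff_integrableOn_Icc_of_le zero_le_one).2 hz') hz
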